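/- Let q be an odd prime power, let n ≥ 1, and let k > n be an integer. Let L(x) ∈ F_q[x] be a monic q-linearized polynomial of q-degree n. If for every nonzero α ∈ F_{q^k} the element L(α)/α is either zero or a square in F_{q^k}, then L(x) = x^{q^n}. Similarly, if for every nonzero α ∈ F_{q^k} the element −L(α)/α is either zero or a square in F_{q^k}, then L(x) = x^{q^n}. -/

import Mathlib

open Polynomial in
lemma aux_expand {F : Type} [Field F] (L R : F[X]) (c : F) (D d : ℕ) (hd : d < D)
    (hL : L = X ^ D + C c * X ^ d + R) (hR : R.degree < d) (r : ℕ) :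
    ∃ S : F[X], L ^ (r + 1) = X ^ (D * (r + 1)) + C ((r + 1 : F) * c) * X ^ (D * r + d) + S ∧
      S.degree < (D * r + d : ℕ) := by
  induction r with
  | zero => exact ⟨R, by simp [hL], by simpa using hR⟩
  | succ r ih =>
    obtain ⟨S, hS, hSd⟩ := ih
    refine ⟨X ^ D * S + (C c * X ^ d + R) * (C ((r + 1 : F) * c) * X ^ (D * r + d) + S)
      + R * X ^ (D * (r + 1)), ?_, ?_⟩
    · rw [pow_succ, hS, hL]
      simp only [C_mul, C_add, Nat.cast_succ, C_1]
      ring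
    · have hSn : ∀ T : F[X], ∀ N : ℕ, T.degree < N → ∀ U : F[X], ∀ M : ℕ, U.degree ≤ M →
          ∀ K, M + N ≤ K → (U * T).degree < (K : ℕ) := by
        intro T N hT U M hU K hK
        rcases eq_or_ne U 0 with rfl | hU0
        · simp
        rcases eq_or_ne T 0 with rfl | hT0
        · simp
        rw [degree_eq_natDegree hU0] at hU
        rw [degree_eq_natDegree hT0] at hT
        rw [degree_mul, degree_eq_natDegree hU0, degree_eq_natDegree hT0]
        norm_cast at *
        omega
      refine lt_of_le_of_lt (degree_add_le _ _) (max_lt (lt_of_le_of_lt (degree_add_le _ _) (max_lt ?_ ?_)) ?_)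
      · exact hSn S _ hSd _ D (by simp) _ (by ring_nf; omega)
      · have h1 : (C c * X ^ d + R).degree < ((d + 1 : ℕ) : WithBot ℕ) := by
          refine lt_of_le_of_lt (degree_add_le _ _) (max_lt ?_ ?_)
          · exact lt_of_le_of_lt (degree_C_mul_X_pow_le _ _) (by norm_cast; omega)
          · exact hR.trans (by norm_cast; omega)
        rw [mul_comm]
        refine hSn _ _ h1 _ (D * r + d) ?_ _ (by ring_nf; omega)
        refine (degree_add_le _ _).trans (max_le (degree_C_mul_X_pow_le _ _) hSd.le)
      · rw [mul_comm]
        exact hSn R _ hR _ (D * (r + 1)) (by simp) _ (by omega)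

open Polynomial in
lemma aux_coeff {F : Type} [Field F] (L R : F[X]) (c : F) (D d : ℕ) (hd : d < D)
    (hL : L = X ^ D + C c * X ^ d + R) (hR : R.degree < d) (r : ℕ) :
    (L ^ (r + 1)).coeff (D * r + d) = (r + 1 : F) * c := by
  obtain ⟨S, hS, hSd⟩ := aux_expand L R c D d hd hL hR r
  rw [hS]
  simp only [coeff_add, coeff_C_mul, coeff_X_pow, coeff_eq_zero_of_degree_lt hSd]
  have : D * r + d ≠ D * (r + 1) := by rw [mul_add]; omega
  simp [this]

lemma aux_rot (k : ℕ) (f : ℕ → ℕ) (i : ℕ) :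
    ∑ t ∈ Finset.range k, f ((i + t) % k) = ∑ t ∈ Finset.range k, f t := by
  induction i with
  | zero =>
    refine Finset.sum_congr rfl fun t ht => ?_
    rw [zero_add, Nat.mod_eq_of_lt (Finset.mem_range.1 ht)]
  | succ i ih =>
    rw [← ih]
    have h1 := Finset.sum_range_succ' (fun t => f ((i + t) % k)) k
    have h2 := Finset.sum_range_succ (fun t => f ((i + t) % k)) k
    have h3 : (i + k) % k = (i + 0) % k := by simp
    rw [h3] at h2
    have : ∑ t ∈ Finset.range k, f ((i + 1 + t) % k)
        = ∑ t ∈ Finset.range k, f ((i + (t + 1)) % k) :=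
      Finset.sum_congr rfl fun t _ => by rw [add_assoc, add_comm 1 t]
    omega

lemma aux_arith (q k m : ℕ) (hq : 2 ≤ q) (hk : 0 < k) (s : Multiset ℕ) (hs : s ≠ 0)
    (hm : m + 1 = q ^ k)
    (hdvd : m ∣ (s.map fun i => q ^ i).sum) : k * (q - 1) ≤ s.card := by
  have hmod : ∀ t, q ^ (t % k) ≡ q ^ t [MOD m] := by
    intro t
    conv_rhs => rw [← Nat.mod_add_div t k, pow_add, pow_mul, ← hm]
    have : (m + 1) ^ (t / k) ≡ 1 ^ (t / k) [MOD m] := Nat.ModEq.pow _ (by simp [Nat.ModEq])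
    simpa using (Nat.ModEq.mul_left (q ^ (t % k)) this).symm
  have h1 : ∀ t, (s.map fun i => q ^ ((i + t) % k)).sum ≡
      q ^ t * (s.map fun i => q ^ i).sum [MOD m] := by
    intro t
    clear hdvd hs
    induction s using Multiset.induction with
    | empty => simp [Nat.ModEq]
    | cons a s ih =>
      simp only [Multiset.map_cons, Multiset.sum_cons, mul_add]
      refine Nat.ModEq.add ?_ ih
      rw [← pow_add, add_comm t]
      exact hmod _
  have h2 : ∀ t, m ≤ (s.map fun i => q ^ ((i + t) % k)).sum := by
    intro t
    refine Nat.le_of_dvd ?_ ?_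
    · obtain ⟨a, ha⟩ := Multiset.exists_mem_of_ne_zero hs
      refine lt_of_lt_of_le (pow_pos (by omega : 0 < q) ((a + t) % k))
        (Multiset.single_le_sum (fun _ _ => Nat.zero_le _) _ (Multiset.mem_map_of_mem _ ha))
    · exact ((h1 t).dvd_iff dvd_rfl).2 (Dvd.dvd.mul_left hdvd _)
  have h3 : ∑ t ∈ Finset.range k, (s.map fun i => q ^ ((i + t) % k)).sum
      = s.card * ∑ t ∈ Finset.range k, q ^ t := by
    clear h2 h1 hdvd hs
    induction s using Multiset.induction with
    | empty => simp
    | cons a s ih =>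
      simp only [Multiset.map_cons, Multiset.sum_cons, Finset.sum_add_distrib, ih,
        Multiset.card_cons, aux_rot k (fun t => q ^ t) a]
      ring
  have h4 : k * m ≤ s.card * ∑ t ∈ Finset.range k, q ^ t := by
    rw [← h3]
    have := Finset.card_nsmul_le_sum (Finset.range k)
      (fun t => (s.map fun i => q ^ ((i + t) % k)).sum) m (fun t _ => h2 t)
    simpa using this
  have h5 : (q - 1) * ∑ t ∈ Finset.range k, q ^ t = m := by
    have := Nat.geomSum_eq hq k
    have h6 := Nat.pred_mul_geom_sum_le q k 
    have h7 := mul_geom_sum (q : ℤ) k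
    zify [show 1 ≤ q by omega]
    rw [h7]
    have : ((m : ℤ) + 1) = (q : ℤ) ^ k := by exact_mod_cast hm
    linarith
  have h8 : 0 < ∑ t ∈ Finset.range k, q ^ t := by
    rcases Nat.eq_zero_or_pos (∑ t ∈ Finset.range k, q ^ t) with h | h
    · rw [h] at h5
      have := Nat.one_lt_pow hk.ne' (by omega : 1 < q)
      omega
    · exact h
  rw [← h5, ← mul_assoc] at h4
  exact Nat.le_of_mul_le_mul_right h4 h8

lemma aux_sum_pow {E : Type} [Field E] [Fintype E] (e : ℕ) (he : e ≠ 0) :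
    ∑ x : E, x ^ e = if Fintype.card E - 1 ∣ e then -1 else 0 := by
  classical
  rw [← FiniteField.sum_pow_units E e, ← Finset.sum_subset (Finset.subset_univ
    (Finset.univ.filter fun x : E => x ≠ 0))]
  · symm
    refine Finset.sum_bij (fun (u : Eˣ) _ => (u : E)) ?_ ?_ ?_ ?_
    · intro a _; simp
    · intro a _ b _ h; exact Units.ext h
    · intro b hb
      exact ⟨Units.mk0 b (by simpa using hb), by simp⟩
    · intro a _; rfl
  · intro x _ hx
    have : x = 0 := by simpa using hx
    simp [this, he]

open Polynomial in
lemma aux_sum_poly {F E : Type} [Field F] [Field E] [Fintype E] [Algebra F E] (G : F[X])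
    (m : ℕ) (hm0 : 0 < m) (hm : m + 1 = Fintype.card E) (hG : G.natDegree < 2 * m) :
    ∑ x : E, aeval x G = - algebraMap F E (G.coeff m) := by
  simp_rw [aeval_eq_sum_range' hG]
  rw [Finset.sum_comm]
  simp_rw [← Finset.smul_sum]
  rw [Finset.sum_eq_single m]
  · rw [aux_sum_pow _ hm0.ne', if_pos (by rw [← hm]; simp), Algebra.smul_def]
    simp
  · intro b hb hbm
    rcases Nat.eq_zero_or_pos b with rfl | hb0
    · simp
    · rw [aux_sum_pow _ hb0.ne', if_neg, smul_zero]
      rw [← hm, Nat.add_sub_cancel]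
      rintro ⟨c, rfl⟩
      have := Finset.mem_range.1 hb
      have h2 : c < 2 := by
        by_contra h
        have : m * 2 ≤ m * c := Nat.mul_le_mul_left _ (by omega)
        omega
      interval_cases c <;> simp at *
  · intro h
    exact absurd (Finset.mem_range.2 (by omega)) h

/-- span of the Frobenius powers inside the algebra of functions -/
def frobSpan (E : Type) [Field E] (q : ℕ) : Submodule E (E → E) :=
  Submodule.span E (Set.range fun (i : ℕ) (x : E) => x ^ q ^ i)

open Pointwise in
lemma aux_span_sum {E : Type} [Field E] [Fintype E] (q k d : ℕ) (hq : 2 ≤ q) (hk : 0 < k)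
    (hE : Fintype.card E = q ^ k) (hd : d < k * (q - 1)) (f : E → E)
    (hf : f ∈ frobSpan E q ^ d) : ∑ x, f x = 0 := by
  rw [frobSpan, Submodule.span_pow] at hf
  have key : ∀ (d : ℕ) (g : E → E), g ∈ (Set.range fun (i : ℕ) (x : E) => x ^ q ^ i) ^ d →
      ∃ s : Multiset ℕ, s.card = d ∧ g = fun x => x ^ (s.map fun i => q ^ i).sum := by
    intro d
    induction d with
    | zero =>
      intro g hg
      refine ⟨0, rfl, ?_⟩
      simp at hg
      rw [hg]; funext x; simp
    | succ d ih =>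
      intro g hg
      rw [pow_succ, Set.mem_mul] at hg
      obtain ⟨a, ha, b, ⟨i, rfl⟩, rfl⟩ := hg
      obtain ⟨s, hs, rfl⟩ := ih a ha
      refine ⟨i ::ₘ s, by simp [hs], ?_⟩
      funext x
      simp [pow_add, mul_comm]
  induction hf using Submodule.span_induction with
  | mem g hg =>
    obtain ⟨s, hs, rfl⟩ := key d g hg
    rcases eq_or_ne s 0 with rfl | hs0
    · simp
    · rw [aux_sum_pow, if_neg]
      · intro h
        have h1 : Fintype.card E - 1 + 1 = q ^ k := by
          have := Fintype.card_pos (α := E)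
          omega
        have := aux_arith q k _ hq hk s hs0 h1 h
        omega
      · obtain ⟨a, ha⟩ := Multiset.exists_mem_of_ne_zero hs0
        refine (lt_of_lt_of_le (pow_pos (by omega : 0 < q) a)
          (Multiset.single_le_sum (fun _ _ => Nat.zero_le _) _ (Multiset.mem_map_of_mem _ ha))).ne'
  | zero => simp
  | add a b _ _ ha hb => simp [Finset.sum_add_distrib, ha, hb]
  | smul c a _ ha => simp [← Finset.mul_sum, ha]

lemma aux_prod_mem {E : Type} [Field E] (q r : ℕ) (S : Finset ℕ) (f : ℕ → E → E)
    (hf : ∀ j, f j ∈ frobSpan E q) : (∏ j ∈ S, f j ^ r) ∈ frobSpan E q ^ (S.card * r) := by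
  classical
  induction S using Finset.induction_on with
  | empty => simp
  | insert a S ha ih =>
    rw [Finset.prod_insert ha, Finset.card_insert_of_notMem ha,
      show (S.card + 1) * r = r + S.card * r by ring, pow_add]
    exact Submodule.mul_mem_mul (Submodule.pow_mem_pow _ (hf a) r) ih

open Polynomial in
lemma aux_core
    (q n k : ℕ) (Fq : Type) [Field Fq] [Fintype Fq] (hq : Fintype.card Fq = q)
    (hqodd : Odd q) (hk : n < k)
    (a : ℕ → Fq) (L : Polynomial Fq)
    (hL : L = ∑ i ∈ Finset.range (n + 1), Polynomial.C (a i) * Polynomial.X ^ q ^ i)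
    (hmonic : a n = 1)
    (E : Type) [Field E] [Fintype E] [Algebra Fq E] (hE : Fintype.card E = q ^ k)
    (m : ℕ) (hm : 2 * m + 1 = q ^ k) (ε : E) (hε : ε ≠ 0)
    (H : ∀ x : E, aeval x L = 0 ∨ aeval x L ^ m = ε * x ^ m) :
    L = X ^ q ^ n := by
  classical
  obtain ⟨r, hr⟩ := hqodd
  have hq1 : 1 < q := hq ▸ Fintype.one_lt_card
  have hqk : q ^ n * q ≤ q ^ k := by
    rw [← pow_succ]; exact Nat.pow_le_pow_right (by omega) (by omega)
  have hqn : 0 < q ^ n := pow_pos (by omega) n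
  have hq3 : q ^ n * 3 ≤ q ^ n * q := Nat.mul_le_mul_left _ (by omega)
  have hm0 : 0 < m := by omega
  -- evaluation formula and Frobenius
  have hev : ∀ x : E, aeval x L = ∑ i ∈ Finset.range (n + 1), algebraMap Fq E (a i) * x ^ q ^ i := by
    intro x; simp [hL]
  have hfrob : ∀ (j : ℕ) (x y : E), (x + y) ^ q ^ j = x ^ q ^ j + y ^ q ^ j := by
    intro j
    induction j with
    | zero => simp
    | succ j ih =>
      intro x y
      have h := map_add (FiniteField.frobeniusAlgHom Fq E) (x ^ q ^ j) (y ^ q ^ j)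
      simp only [FiniteField.frobeniusAlgHom_apply, hq] at h
      rw [pow_succ, pow_mul, pow_mul, pow_mul, ih, h]
  have hLfrob : ∀ (j : ℕ) (x : E), aeval x L ^ q ^ j = aeval (x ^ q ^ j) L := by
    intro j
    induction j with
    | zero => simp
    | succ j ih =>
      intro x
      have h := Polynomial.aeval_algHom_apply (FiniteField.frobeniusAlgHom Fq E) (x ^ q ^ j) L
      simp only [FiniteField.frobeniusAlgHom_apply, hq] at h
      rw [pow_succ, pow_mul, ih, ← h, pow_mul]
  have hadd : ∀ x y : E, aeval (x + y) L = aeval x L + aeval y L := by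
    intro x y
    simp only [hev, hfrob, mul_add, Finset.sum_add_distrib]
  -- decomposition
  have hLX : L = X ^ q ^ n + ∑ i ∈ Finset.range n, C (a i) * X ^ q ^ i := by
    rw [hL, Finset.sum_range_succ, hmonic]; simp [add_comm]
  have hdegS : ∀ N : ℕ, N ≤ n → (∑ i ∈ Finset.range N, C (a i) * X ^ q ^ i).degree < ((q ^ N : ℕ) : WithBot ℕ) := by
    intro N _
    refine (degree_sum_le _ _).trans_lt ((Finset.sup_lt_iff (WithBot.bot_lt_coe _)).2 ?_)
    intro i hi
    refine (degree_C_mul_X_pow_le _ _).trans_lt ?_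
    exact_mod_cast Nat.pow_lt_pow_right hq1 (Finset.mem_range.1 hi)
  have hLmonic : L.Monic := by
    rw [hLX]; exact monic_X_pow_add (hdegS n le_rfl)
  have hLdeg : L.natDegree = q ^ n := by
    rw [hLX]
    exact natDegree_eq_of_degree_eq_some (by
      rw [degree_add_eq_left_of_degree_lt (by simpa using hdegS n le_rfl)]; simp)
  -- injectivity
  have hinj : ∀ u : E, aeval u L = 0 → u = 0 := by
    intro u hu
    have hP : ((X + C u) ^ m - X ^ m) * L.map (algebraMap Fq E) = 0 := by
      refine Polynomial.eq_zero_of_natDegree_lt_card_of_eval_eq_zero _ (ι := E) (f := id)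
        Function.injective_id ?_ ?_
      · intro x
        simp only [id, eval_mul, eval_sub, eval_pow, eval_add, eval_X, eval_C, eval_map_algebraMap]
        rcases H x with h | h
        · rw [h, mul_zero]
        · rcases H (x + u) with h' | h'
          · rw [hadd, hu, add_zero] at h'
            rw [h', mul_zero]
          · rw [hadd, hu, add_zero, h] at h'
            rw [mul_left_cancel₀ hε h', sub_self, zero_mul]
      · rw [hE]
        refine natDegree_mul_le.trans_lt ?_
        rw [natDegree_map, hLdeg]
        have : ((X + C u) ^ m - X ^ m : E[X]).natDegree ≤ m := by
          refine (natDegree_sub_le_of_le (m := m) ?_ (natDegree_X_pow_le m)).trans (max_self m).le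
          refine (natDegree_pow_le_of_le m (natDegree_X_add_C u).le).trans (by simp)
        omega
    have h1 := (mul_eq_zero.1 hP).resolve_right
      ((Polynomial.map_ne_zero_iff (algebraMap Fq E).injective).2 hLmonic.ne_zero)
    have h2 := congrArg (eval 0) h1
    simp [hm0.ne'] at h2
    exact h2
  have hpow : ∀ x : E, aeval x L ^ m = ε * x ^ m := by
    intro x
    rcases H x with h | h
    · rw [h, hinj x h]; simp [hm0.ne']
    · exact h
  -- contradiction from a second coefficient
  by_contra hne
  have hex : ∃ i, i < n ∧ a i ≠ 0 ∧ ∀ j, i < j → j < n → a j = 0 := by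
    have hne' : ((Finset.range n).filter fun i => a i ≠ 0).Nonempty := by
      by_contra h
      rw [Finset.not_nonempty_iff_eq_empty, Finset.filter_eq_empty_iff] at h
      apply hne
      rw [hLX, Finset.sum_eq_zero, add_zero]
      intro i hi
      have := h hi
      simp only [ne_eq, not_not] at this
      simp [this]
    obtain ⟨i, hi, hmax⟩ := Finset.exists_max_image _ id hne'
    simp only [Finset.mem_filter, Finset.mem_range, id] at hi hmax
    refine ⟨i, hi.1, hi.2, fun j hj hjn => ?_⟩
    by_contra h
    have := hmax j ⟨hjn, h⟩
    omega
  obtain ⟨i, hin, hai, hmax⟩ := hex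
  have hL3 : L = X ^ q ^ n + C (a i) * X ^ q ^ i + ∑ j ∈ Finset.range i, C (a j) * X ^ q ^ j := by
    have : ∑ j ∈ Finset.range n, C (a j) * X ^ q ^ j
        = ∑ j ∈ Finset.range (i + 1), C (a j) * X ^ q ^ j := by
      symm
      refine Finset.sum_subset (Finset.range_mono (by omega)) ?_
      intro j hj hj'
      simp only [Finset.mem_range] at hj hj'
      simp [hmax j (by omega) hj]
    rw [hLX, this, Finset.sum_range_succ]
    ring
  have hin' : q ^ i < q ^ n := Nat.pow_lt_pow_right hq1 hin
  have hcoeff := aux_coeff L _ (a i) (q ^ n) (q ^ i) hin' hL3 (hdegS i hin.le) r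
  -- the test function
  let Xf : ℕ → E → E := fun j x => x ^ q ^ j
  let Lf : ℕ → E → E := fun j x => aeval x L ^ q ^ j
  have hX : ∀ j, Xf j ∈ frobSpan E q := fun j => Submodule.subset_span ⟨j, rfl⟩
  have hLf : ∀ j, Lf j ∈ frobSpan E q := by
    intro j
    have : Lf j = ∑ i ∈ Finset.range (n + 1), algebraMap Fq E (a i) • Xf (i + j) := by
      funext x
      have e : Lf j x = aeval (x ^ q ^ j) L := hLfrob j x
      rw [e, hev, Finset.sum_apply]
      simp only [Xf, Pi.smul_apply, smul_eq_mul]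
      refine Finset.sum_congr rfl fun i _ => ?_
      rw [← pow_mul, ← pow_add, add_comm]
    rw [this]
    exact Submodule.sum_mem _ fun i _ => Submodule.smul_mem _ _ (hX _)
  let S := ((Finset.range k).erase n).erase i
  have hiS : i ∈ (Finset.range k).erase n := by
    simp only [Finset.mem_erase, Finset.mem_range]; omega
  have hnS : n ∈ Finset.range k := Finset.mem_range.2 hk
  have hScard : S.card = k - 2 := by
    rw [Finset.card_erase_of_mem hiS, Finset.card_erase_of_mem hnS, Finset.card_range]; omega
  have hmem := Submodule.mul_mem_mul
    (Submodule.mul_mem_mul (aux_prod_mem q r S Xf hX) (Submodule.pow_mem_pow _ (hX i) (r - 1)))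
    (Submodule.mul_mem_mul (Submodule.pow_mem_pow _ (hLf 1) 1)
      (aux_prod_mem q r (Finset.Ico 1 k) Lf hLf))
  rw [← pow_add, ← pow_add, ← pow_add, hScard, Nat.card_Ico] at hmem
  have hsum := aux_span_sum q k _ (by omega) (by omega) hE ?_ _ hmem
  swap
  · obtain ⟨k', rfl⟩ : ∃ k', k = k' + 2 := ⟨k - 2, by omega⟩
    obtain ⟨r', rfl⟩ : ∃ r', r = r' + 1 := ⟨r - 1, by omega⟩
    have : q - 1 = 2 * (r' + 1) := by omega
    rw [this]
    simp only [Nat.add_sub_cancel, show k' + 2 - 1 = k' + 1 by omega]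
    nlinarith
  -- exponents
  have hgeom : r * ∑ j ∈ Finset.range k, q ^ j = m := by
    have h7 := mul_geom_sum (q : ℤ) k
    have h8 : (2 * (m : ℤ) + 1) = (q : ℤ) ^ k := by exact_mod_cast hm
    have h9 : (q : ℤ) = 2 * r + 1 := by exact_mod_cast hr
    have : (2 : ℤ) * (r * ∑ j ∈ Finset.range k, (q : ℤ) ^ j) = 2 * m := by
      rw [← h8] at h7
      have : (q : ℤ) - 1 = 2 * r := by linarith
      rw [this] at h7
      linarith
    zify
    linarith
  set B := r * ∑ j ∈ S, q ^ j + (r - 1) * q ^ i with hB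
  have hBm : B + r * q ^ n + q ^ i = m := by
    rw [← hgeom, ← Finset.add_sum_erase _ _ hnS, ← Finset.add_sum_erase _ _ hiS, hB]
    obtain ⟨r', rfl⟩ : ∃ r', r = r' + 1 := ⟨r - 1, by omega⟩
    simp only [Nat.add_sub_cancel, S]
    ring
  have hLe : q + r * ∑ j ∈ Finset.Ico 1 k, q ^ j = m + (r + 1) := by
    rw [← hgeom, Finset.range_eq_Ico, Finset.sum_eq_sum_Ico_succ_bot (by omega : 0 < k)]
    simp only [pow_zero, mul_add, zero_add]
    omega
  have hfun : ∀ x : E, ((∏ j ∈ S, Xf j ^ r) * Xf i ^ (r - 1) *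
      (Lf 1 ^ 1 * ∏ j ∈ Finset.Ico 1 k, Lf j ^ r)) x
        = ε * aeval x (X ^ (B + m) * L ^ (r + 1)) := by
    intro x
    simp only [Pi.mul_apply, Pi.pow_apply, Finset.prod_apply, Xf, Lf, map_mul, map_pow, aeval_X]
    have e1 : ∏ j ∈ S, (x ^ q ^ j) ^ r = x ^ (r * ∑ j ∈ S, q ^ j) := by
      rw [Finset.prod_pow, Finset.prod_pow_eq_pow_sum, ← pow_mul, mul_comm]
    have e2 : ∏ j ∈ Finset.Ico 1 k, (aeval x L ^ q ^ j) ^ r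
        = aeval x L ^ (r * ∑ j ∈ Finset.Ico 1 k, q ^ j) := by
      rw [Finset.prod_pow, Finset.prod_pow_eq_pow_sum, ← pow_mul, mul_comm]
    rw [e1, e2, ← pow_mul, ← pow_add, pow_one, pow_one, ← pow_add, hLe, pow_add (aeval x L),
      hpow, mul_comm (q ^ i), ← hB, pow_add x]
    ring
  simp_rw [hfun] at hsum
  rw [← Finset.mul_sum, aux_sum_poly _ (2 * m) (by omega) (by omega)] at hsum
  · have hc : (X ^ (B + m) * L ^ (r + 1)).coeff (2 * m) = (r + 1 : Fq) * a i := by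
      rw [← hcoeff, show 2 * m = (q ^ n * r + q ^ i) + (B + m) by rw [mul_comm (q ^ n)]; omega,
        Polynomial.coeff_X_pow_mul]
    rw [hc] at hsum
    have h0 : (r + 1 : Fq) * a i = 0 := by
      have := (mul_eq_zero.1 hsum).resolve_left hε
      rw [neg_eq_zero] at this
      exact (map_eq_zero _).1 this
    have h1 : (r + 1 : Fq) = 0 := (mul_eq_zero.1 h0).resolve_right hai
    have h2 : (q : Fq) = 0 := by rw [← hq]; exact FiniteField.cast_card_eq_zero Fq
    rw [hr] at h2
    push_cast at h2
    have : (1 : Fq) = 0 := by linear_combination 2 * h1 - h2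
    exact one_ne_zero this
  · refine natDegree_mul_le.trans_lt ?_
    rw [natDegree_X_pow, natDegree_pow, hLdeg, add_mul, one_mul]
    have : 0 < q ^ i := pow_pos (by omega) i
    omega


/-- Let `q` be an odd prime power, `n ≥ 1`, `k > n`, and let
`L(x) ∈ F_q[x]` be a monic `q`-linearized polynomial of `q`-degree `n`. If for every
nonzero `α ∈ F_{q^k}` the element `L(α)/α` is zero or a square in `F_{q^k}`, then
`L(x) = x^(qⁿ)`; similarly if for every nonzero `α ∈ F_{q^k}` the element `−L(α)/α` is
zero or a square in `F_{q^k}`, then `L(x) = x^(qⁿ)`. -/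
theorem linearized_with_square_values_eq_X_pow
    (q n k : ℕ) (Fq : Type) [Field Fq] [Fintype Fq] (hq : Fintype.card Fq = q)
    (hqodd : Odd q) (hn : 1 ≤ n) (hk : n < k)
    (a : ℕ → Fq) (L : Polynomial Fq)
    (hL : L = ∑ i ∈ Finset.range (n + 1), Polynomial.C (a i) * Polynomial.X ^ q ^ i)
    (hmonic : a n = 1)
    (E : Type) [Field E] [Fintype E] [Algebra Fq E] (hE : Fintype.card E = q ^ k) :
    ((∀ α : E, α ≠ 0 →
        Polynomial.aeval α L / α = 0 ∨ ∃ γ : E, Polynomial.aeval α L / α = γ ^ 2) →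
      L = Polynomial.X ^ q ^ n) ∧
    ((∀ α : E, α ≠ 0 →
        -(Polynomial.aeval α L / α) = 0 ∨ ∃ γ : E, -(Polynomial.aeval α L / α) = γ ^ 2) →
      L = Polynomial.X ^ q ^ n) := by
  obtain ⟨m, hm⟩ : ∃ m, q ^ k = 2 * m + 1 := hqodd.pow
  have hm0 : m ≠ 0 := by
    rintro rfl
    have h1 : 1 < q := hq ▸ Fintype.one_lt_card
    have := Nat.one_lt_pow (by omega : k ≠ 0) h1
    omega
  have hsq : ∀ γ : E, γ ≠ 0 → (γ ^ 2) ^ m = 1 := by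
    intro γ hγ
    have := FiniteField.pow_card_sub_one_eq_one γ hγ
    rw [hE, hm, Nat.add_sub_cancel, pow_mul] at this
    exact this
  constructor
  · intro h
    refine aux_core q n k Fq hq hqodd hk a L hL hmonic E hE m hm.symm 1 one_ne_zero ?_
    intro x
    by_cases h0 : Polynomial.aeval x L = 0
    · exact Or.inl h0
    by_cases hx : x = 0
    · refine absurd ?_ h0
      subst hx
      simp [hL, show q ≠ 0 by rintro rfl; simp at hqodd]
    right
    rcases h x hx with h | ⟨γ, h⟩
    · exact absurd ((div_eq_zero_iff.1 h).resolve_right hx) h0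
    · have hγ : γ ≠ 0 := by
        rintro rfl
        exact div_ne_zero h0 hx (by simpa using h)
      have h2 := hsq γ hγ
      rw [← h, div_pow, div_eq_one_iff_eq (pow_ne_zero _ hx)] at h2
      rw [h2, one_mul]
  · intro h
    refine aux_core q n k Fq hq hqodd hk a L hL hmonic E hE m hm.symm ((-1) ^ m)
      (pow_ne_zero _ (by simp)) ?_
    intro x
    by_cases h0 : Polynomial.aeval x L = 0
    · exact Or.inl h0
    by_cases hx : x = 0
    · refine absurd ?_ h0
      subst hx
      simp [hL, show q ≠ 0 by rintro rfl; simp at hqodd]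
    right
    rcases h x hx with h | ⟨γ, h⟩
    · exact absurd ((div_eq_zero_iff.1 (neg_eq_zero.1 h)).resolve_right hx) h0
    · have hγ : γ ≠ 0 := by
        rintro rfl
        exact neg_ne_zero.2 (div_ne_zero h0 hx) (by simpa using h)
      have h2 := hsq γ hγ
      rw [← h, ← div_neg, div_pow, div_eq_one_iff_eq (pow_ne_zero _ (neg_ne_zero.2 hx))] at h2
      rw [h2, ← mul_pow, neg_one_mul]
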